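/- arXiv:1803.00444 — 5 statements merged into one kernel-verified Lean document; each statement's English description precedes it below -/
import Mathlib

section
/- (Proposition 1, Affine Invariance) For every finite MDP with discount factor γ ∈ [0,1), every x ∈ (0,∞), every y ∈ ℝ, and every state s and action a such that Q*_R(s,·) is non-constant on A, the function Q*_{xR+y}(s,·) is also non-constant on A and the normalized state-action values coincide: Q^•_R(s,a) = Q^•_{xR+y}(s,a). -/
/-!
The function `x * Q*_R + y / (1 - γ)` satisfies the Bellman optimality equation for the reward
`x * R + y`: a positive scaling and a shift commute with the maximum over actions, and each row of
the kernel `T` sums to one. Fixed points of the Bellman operator are unique (`bellman_le`, applied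
in both directions), so `Q*_{xR+y}` is this increasing affine image of `Q*_R`, and an increasing
affine change of the action values cancels in the normalization.
-/

open Finset

theorem sup'_affine {A : Type*} [Fintype A] [Nonempty A] (f : A → ℝ) {x : ℝ} (hx : 0 < x)
    (c : ℝ) : univ.sup' univ_nonempty (fun a => x * f a + c) =
      x * univ.sup' univ_nonempty f + c := by
  have hmono : Monotone fun t : ℝ => x * t + c := fun p q h => by
    have := mul_le_mul_of_nonneg_left h hx.le
    dsimp only
    linarith
  exact (apply_sup'_eq_sup'_comp univ_nonempty (fun t : ℝ => x * t + c)
    (fun p q => hmono.map_sup p q)).symm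

theorem inf'_affine {A : Type*} [Fintype A] [Nonempty A] (f : A → ℝ) {x : ℝ} (hx : 0 < x)
    (c : ℝ) : univ.inf' univ_nonempty (fun a => x * f a + c) =
      x * univ.inf' univ_nonempty f + c := by
  have hmono : Monotone fun t : ℝ => x * t + c := fun p q h => by
    have := mul_le_mul_of_nonneg_left h hx.le
    dsimp only
    linarith
  exact (apply_inf'_eq_inf'_comp univ_nonempty (fun t : ℝ => x * t + c)
    (fun p q => hmono.map_inf p q)).symm

/-- Two fixed points of the same Bellman operator are comparable: the largest value `M` of `P - P'`
satisfies `M ≤ γ * M`, hence `M ≤ 0`. -/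
theorem bellman_le {S A : Type*} [Fintype S] [Fintype A] [Nonempty S] [Nonempty A]
    {T : S → A → S → ℝ} (hT0 : ∀ s a s', 0 ≤ T s a s') (hT1 : ∀ s a, ∑ s', T s a s' = 1)
    {R : S → ℝ} {γ : ℝ} (hγ0 : 0 ≤ γ) (hγ1 : γ < 1) {P P' : S → A → ℝ}
    (hP : ∀ s a, P s a = R s + γ * ∑ s', T s a s' * univ.sup' univ_nonempty (P s'))
    (hP' : ∀ s a, P' s a = R s + γ * ∑ s', T s a s' * univ.sup' univ_nonempty (P' s'))
    (s : S) (a : A) : P s a ≤ P' s a := by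
  obtain ⟨⟨s₀, a₀⟩, hmax⟩ := Finite.exists_max fun p : S × A => P p.1 p.2 - P' p.1 p.2
  dsimp only at hmax
  set M := P s₀ a₀ - P' s₀ a₀ with hM
  have hsup : ∀ s', univ.sup' univ_nonempty (P s') ≤ univ.sup' univ_nonempty (P' s') + M := by
    intro s'
    refine sup'_le _ _ fun b _ => ?_
    have h1 := hmax (s', b)
    have h2 := le_sup' (P' s') (mem_univ b)
    dsimp only at h1
    linarith
  have hsum : ∑ s', T s₀ a₀ s' * univ.sup' univ_nonempty (P s') ≤
      ∑ s', T s₀ a₀ s' * univ.sup' univ_nonempty (P' s') + M := by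
    calc _ ≤ ∑ s', T s₀ a₀ s' * (univ.sup' univ_nonempty (P' s') + M) :=
          sum_le_sum fun s' _ => mul_le_mul_of_nonneg_left (hsup s') (hT0 _ _ _)
      _ = _ := by simp only [mul_add, sum_add_distrib, ← sum_mul, hT1, one_mul]
  have hγM : M ≤ γ * M := by
    have := mul_le_mul_of_nonneg_left hsum hγ0
    have h1 := hP s₀ a₀
    have h2 := hP' s₀ a₀
    linarith
  have hM0 : M ≤ 0 := by nlinarith
  have := hmax (s, a)
  dsimp only at this
  linarith

/-- Proposition 1, Affine Invariance: for every finite MDP with γ ∈ [0,1),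
x ∈ (0,∞), y ∈ ℝ, and every state s and action a such that `Q*_R(s,·)` is non-constant,
`Q*_{xR+y}(s,·)` is also non-constant and the normalized state-action values coincide. -/
theorem normalizedQ_affine_invariance {S A : Type*} [Fintype S] [Fintype A]
    [Nonempty S] [Nonempty A]
    (T : S → A → S → ℝ) (hT0 : ∀ s a s', 0 ≤ T s a s') (hT1 : ∀ s a, ∑ s', T s a s' = 1)
    (R : S → ℝ) (γ : ℝ) (hγ0 : 0 ≤ γ) (hγ1 : γ < 1)
    (x y : ℝ) (hx : 0 < x)
    (Q Qxy : S → A → ℝ)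
    (hQ : ∀ s a, Q s a = R s + γ * ∑ s', T s a s' * univ.sup' univ_nonempty (Q s'))
    (hQxy : ∀ s a, Qxy s a =
      (x * R s + y) + γ * ∑ s', T s a s' * univ.sup' univ_nonempty (Qxy s'))
    (s : S) (a : A)
    (hnc : ∃ a1 a2 : A, Q s a1 ≠ Q s a2) :
    (∃ a1 a2 : A, Qxy s a1 ≠ Qxy s a2) ∧
    (Q s a - univ.inf' univ_nonempty (Q s)) /
        (univ.sup' univ_nonempty (Q s) - univ.inf' univ_nonempty (Q s)) =
      (Qxy s a - univ.inf' univ_nonempty (Qxy s)) /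
        (univ.sup' univ_nonempty (Qxy s) - univ.inf' univ_nonempty (Qxy s)) := by
  have hγ : 1 - γ ≠ 0 := by linarith
  set c := y / (1 - γ) with hc
  have hyc : y + γ * c = c := by rw [hc]; field_simp; ring
  have hfix : ∀ s a, (fun s a => x * Q s a + c) s a = (x * R s + y) + γ * ∑ s', T s a s' *
      univ.sup' univ_nonempty ((fun s a => x * Q s a + c) s') := by
    intro s a
    have hsum : ∑ s', T s a s' * (x * univ.sup' univ_nonempty (Q s') + c) =
        x * ∑ s', T s a s' * univ.sup' univ_nonempty (Q s') + c := by
      simp only [mul_add, sum_add_distrib, ← sum_mul, hT1, one_mul, mul_sum, mul_left_comm]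
    simp only [sup'_affine _ hx, hsum]
    rw [hQ s a]
    linear_combination -hyc
  have hQ' : Qxy = fun s a => x * Q s a + c := by
    funext s a
    exact le_antisymm (bellman_le (R := fun s => x * R s + y) hT0 hT1 hγ0 hγ1 hQxy hfix s a)
      (bellman_le (R := fun s => x * R s + y) hT0 hT1 hγ0 hγ1 hfix hQxy s a)
  subst hQ'
  constructor
  · obtain ⟨a₁, a₂, h⟩ := hnc
    exact ⟨a₁, a₂, fun h' => h (mul_left_cancel₀ hx.ne' (add_right_cancel h'))⟩
  · simp only [sup'_affine _ hx, inf'_affine _ hx, add_sub_add_right_eq_sub, ← mul_sub]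
    rw [mul_div_mul_left _ _ hx.ne']
end

section
/- For every finite MDP with discount factor γ ∈ [0,1), every x ∈ (0,∞) and every y ∈ ℝ, if Q : S×A → ℝ is a fixed point of the Bellman optimality operator B_R, then the function (s,a) ↦ x·Q(s,a) + y/(1−γ) is a fixed point of the Bellman optimality operator B_{xR+y}. -/
/-!
Since `x > 0`, the map `t ↦ x * t + c` is increasing, so it passes through the maximum over
actions. Each row of `T` sums to `1`, so with `c = y / (1 - γ)` the operator for `x R + y` sends
`x Q + c` to `x (B_R Q) + (y + γ c)`. Finally `B_R Q = Q` and `y + γ c = c`.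
-/

/-- The Bellman optimality operator of a finite MDP:
`(B_R Q)(s,a) = R(s) + γ·∑_{s'} T(s'|s,a)·max_{a'} Q(s',a')`. -/
noncomputable def bellman {S A : Type*} [Fintype S] [Fintype A] [Nonempty A]
    (T : S → A → S → ℝ) (R : S → ℝ) (γ : ℝ) (Q : S → A → ℝ) : S → A → ℝ :=
  fun s a => R s + γ * ∑ s', T s a s' * (Finset.univ.sup' Finset.univ_nonempty (Q s'))

/-- if Q is a fixed point of `B_R`, then `(s,a) ↦ x·Q(s,a) + y/(1−γ)`
is a fixed point of `B_{xR+y}`. -/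
theorem bellman_fixedPoint_affine {S A : Type*} [Fintype S] [Fintype A]
    [Nonempty S] [Nonempty A]
    (T : S → A → S → ℝ) (hT0 : ∀ s a s', 0 ≤ T s a s') (hT1 : ∀ s a, ∑ s', T s a s' = 1)
    (R : S → ℝ) (γ : ℝ) (hγ0 : 0 ≤ γ) (hγ1 : γ < 1)
    (x y : ℝ) (hx : 0 < x)
    (Q : S → A → ℝ) (hQ : bellman T R γ Q = Q) :
    bellman T (fun s => x * R s + y) γ (fun s a => x * Q s a + y / (1 - γ)) =
      fun s a => x * Q s a + y / (1 - γ) := by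
  have hγ : 1 - γ ≠ 0 := by linarith
  -- The increasing map `t ↦ x * t + c` commutes with the maximum over actions.
  have hmax (s' : S) (c : ℝ) :
      Finset.univ.sup' Finset.univ_nonempty (fun a => x * Q s' a + c) =
        x * Finset.univ.sup' Finset.univ_nonempty (Q s') + c := by
    have hmono : Monotone fun t : ℝ => x * t + c := fun t u htu => by
      dsimp only
      gcongr
    exact (Finset.apply_sup'_eq_sup'_comp Finset.univ_nonempty (fun t : ℝ => x * t + c)
      (fun t u => hmono.map_sup t u)).symm
  funext s a
  have hQsa := congrFun (congrFun hQ s) a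
  simp only [bellman] at hQsa ⊢
  simp only [hmax, mul_add, Finset.sum_add_distrib, ← Finset.sum_mul, hT1, mul_left_comm _ x,
    ← Finset.mul_sum]
  rw [← hQsa]
  field_simp
  ring
end

section
/- Consider a finite MDP with discount factor γ ∈ [0,1) and subgoal reward R_g(s) = C if s = g and 0 otherwise (C > 0). Let Q be the unique fixed point of the Bellman optimality operator B_{R_g}, let π_g : S → A be any greedy policy for Q (i.e., π_g(s) maximizes Q(s,·) for every s), let P be the induced transition matrix P_{s,s'} = T(s'|s,π_g(s)), and let ρ^{π_g}(g|s') = ∑_{t=0}^∞ γ^t (P^t)_{s',g}. Then for all s ∈ S and a ∈ A: Q(s,a) = R_g(s) + γ·C·∑_{s'∈S} T(s'|s,a)·ρ^{π_g}(g|s'). -/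
/-!
Write `V s = Q s (polg s)`. Greediness identifies `V` with the pointwise maximum of `Q`, so the
Bellman equation becomes the linear equation `V = R_g + γ P V`. Unrolling it `n` times gives
`V = C ∑_{t<n} γ^t (P^t)(·, g) + γ^n P^n V`. Since `P` is stochastic, `P^n V` is bounded uniformly
in `n`, so the remainder vanishes and the nonnegative series `∑ γ^t (P^t)(s, g)` converges, with
`V = C ρ`. Substituting this into the Bellman equation for `Q` gives the claim.
-/

open Finset

/-- Powers of a stochastic matrix do not increase sup-norm bounds. -/
lemma abs_pow_mulVec_le {S : Type*} [Fintype S] [DecidableEq S] (P : Matrix S S ℝ)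
    (h0 : ∀ s s', 0 ≤ P s s') (h1 : ∀ s, ∑ s', P s s' = 1) (V : S → ℝ) (M : ℝ)
    (hV : ∀ s, |V s| ≤ M) (n : ℕ) (s : S) : |(P ^ n).mulVec V s| ≤ M := by
  induction n generalizing s with
  | zero => simpa using hV s
  | succ n ih =>
    rw [pow_succ', ← Matrix.mulVec_mulVec]
    calc |P.mulVec ((P ^ n).mulVec V) s|
        ≤ ∑ s', |P s s' * (P ^ n).mulVec V s'| := Finset.abs_sum_le_sum_abs _ _
      _ ≤ ∑ s', P s s' * M := by
          refine Finset.sum_le_sum fun s' _ => ?_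
          rw [abs_mul, abs_of_nonneg (h0 s s')]
          exact mul_le_mul_of_nonneg_left (ih s') (h0 s s')
      _ = M := by rw [← Finset.sum_mul, h1, one_mul]

lemma pow_entry_nonneg {S : Type*} [Fintype S] [DecidableEq S] (P : Matrix S S ℝ)
    (h0 : ∀ s s', 0 ≤ P s s') (n : ℕ) (s s' : S) : 0 ≤ (P ^ n) s s' := by
  induction n generalizing s with
  | zero =>
    rw [pow_zero, Matrix.one_apply]
    split_ifs <;> norm_num
  | succ n ih =>
    rw [pow_succ', Matrix.mul_apply]
    exact Finset.sum_nonneg fun j _ => mul_nonneg (h0 s j) (ih j)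

/-- The `n`-step unrolling of `V = C·1_g + γ P V`. -/
lemma value_unroll {S : Type*} [Fintype S] [DecidableEq S] (P : Matrix S S ℝ) (γ C : ℝ) (g : S)
    (V : S → ℝ) (hV : V = Pi.single g C + γ • P.mulVec V) (n : ℕ) (s : S) :
    V s = C * ∑ t ∈ Finset.range n, γ ^ t * (P ^ t) s g + γ ^ n * (P ^ n).mulVec V s := by
  induction n with
  | zero => simp
  | succ n ih =>
    have step : (P ^ n).mulVec V s = (P ^ n) s g * C + γ * (P ^ (n + 1)).mulVec V s := by
      conv_lhs => rw [hV]
      rw [Matrix.mulVec_add, Matrix.mulVec_smul, Matrix.mulVec_mulVec, ← pow_succ]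
      simp [Matrix.mulVec_single, mul_comm]
    rw [ih, step, Finset.sum_range_succ]
    ring

/-- for the subgoal reward `R_g(s) = C·1[s=g]` (C > 0), the optimal
Q-function (fixed point of `B_{R_g}`) satisfies, for any greedy policy `π_g` with
induced transition matrix P and visitation distribution `ρ^{π_g}`,
`Q(s,a) = R_g(s) + γ·C·∑_{s'} T(s'|s,a)·ρ^{π_g}(g|s')`. -/
theorem subgoal_Q_visitation_decomposition {S A : Type*} [Fintype S] [Fintype A]
    [DecidableEq S] [Nonempty S] [Nonempty A]
    (T : S → A → S → ℝ) (hT0 : ∀ s a s', 0 ≤ T s a s') (hT1 : ∀ s a, ∑ s', T s a s' = 1)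
    (γ : ℝ) (hγ0 : 0 ≤ γ) (hγ1 : γ < 1)
    (g : S) (C : ℝ) (hC : 0 < C)
    (Rg : S → ℝ) (hRg : ∀ s, Rg s = if s = g then C else 0)
    (Q : S → A → ℝ)
    (hQ : ∀ s a, Q s a = Rg s + γ * ∑ s', T s a s' * univ.sup' univ_nonempty (Q s'))
    (polg : S → A) (hpolg : ∀ s a', Q s a' ≤ Q s (polg s))
    (P : Matrix S S ℝ) (hP : ∀ s s', P s s' = T s (polg s) s')
    (ρ : S → ℝ) (hρ : ∀ s', ρ s' = ∑' t : ℕ, γ ^ t * (P ^ t) s' g) :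
    ∀ s a, Q s a = Rg s + γ * C * ∑ s', T s a s' * ρ s' := by
  have hsup : ∀ s, univ.sup' univ_nonempty (Q s) = Q s (polg s) := fun s =>
    le_antisymm (Finset.sup'_le _ _ fun a _ => hpolg s a) (Finset.le_sup' (Q s) (mem_univ _))
  simp only [hsup] at hQ
  set V : S → ℝ := fun s => Q s (polg s) with hVdef
  have hV : V = Pi.single g C + γ • P.mulVec V := by
    funext s
    simp only [hVdef, Pi.add_apply, Pi.smul_apply, smul_eq_mul, Matrix.mulVec, dotProduct, hP,
      Pi.single_apply]
    rw [← hRg]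
    exact hQ s (polg s)
  have h0 : ∀ s s', 0 ≤ P s s' := fun s s' => by rw [hP]; exact hT0 _ _ _
  have h1 : ∀ s, ∑ s', P s s' = 1 := fun s => by simp only [hP]; exact hT1 _ _
  have hM : ∀ s, |V s| ≤ ∑ s', |V s'| := fun s =>
    Finset.single_le_sum (f := fun s' => |V s'|) (fun i _ => abs_nonneg _) (mem_univ s)
  have key : ∀ s, V s = C * ρ s := by
    intro s
    have hrem : Filter.Tendsto (fun n : ℕ => γ ^ n * (P ^ n).mulVec V s) Filter.atTop
        (nhds 0) := by
      refine squeeze_zero_norm (a := fun n : ℕ => γ ^ n * ∑ s', |V s'|) (fun n => ?_) ?_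
      · rw [Real.norm_eq_abs, abs_mul, abs_of_nonneg (pow_nonneg hγ0 n)]
        exact mul_le_mul_of_nonneg_left (abs_pow_mulVec_le P h0 h1 V _ hM n s)
          (pow_nonneg hγ0 n)
      · simpa using (tendsto_pow_atTop_nhds_zero_of_lt_one hγ0 hγ1).mul_const (∑ s', |V s'|)
    have hsum : HasSum (fun t : ℕ => γ ^ t * (P ^ t) s g) (V s / C) := by
      rw [hasSum_iff_tendsto_nat_of_nonneg
        (fun t => mul_nonneg (pow_nonneg hγ0 t) (pow_entry_nonneg P h0 t s g))]
      have hlim := (hrem.const_sub (V s)).div_const C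
      rw [sub_zero] at hlim
      refine hlim.congr fun n => ?_
      rw [div_eq_iff hC.ne']
      linarith [value_unroll P γ C g V hV n s]
    rw [hρ, hsum.tsum_eq, mul_div_cancel₀ _ hC.ne']
  intro s a
  rw [hQ s a, mul_assoc, Finset.mul_sum (a := C)]
  congr 2
  refine Finset.sum_congr rfl fun s' _ => ?_
  have hk : Q s' (polg s') = C * ρ s' := key s'
  rw [hk]
  ring
end

section
/- For every finite MDP with discount factor γ ∈ [0,1), if Q is the unique fixed point of the Bellman optimality operator B_R and π : S → A is greedy with respect to Q (π(s) maximizes Q(s,·) for every s), then the value function of π equals the optimal value function: V^π_R(s) = max_{a∈A} Q(s,a) for every s ∈ S, where V^π_R is the unique fixed point of the policy evaluation operator (B^π_R V)(s) = R(s) + γ·∑_{s'} T(s'|s,π(s))·V(s'). -/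
open Finset

/-!
The state-value function `W s = max_a Q s a` satisfies `W s = Q s (pol s)` by greediness, so the
Bellman optimality equation at `(s, pol s)` says that `W` is a fixed point of the policy evaluation
operator, as `V` is. That operator is affine with linear part `γ P`, where `P` is row-stochastic;
hence `D = V - W` solves `D = γ P D`, and `eq_zero_of_eq_discounted_average` gives `D = 0`.
-/

/-- Uniqueness for policy evaluation: at a state where `|D|` is largest, `D = γ P D` forces
`|D| ≤ γ |D|`, hence `D = 0` everywhere. -/
theorem eq_zero_of_eq_discounted_average {S : Type*} [Fintype S] [Nonempty S]
    (P : S → S → ℝ) (hP0 : ∀ s s', 0 ≤ P s s') (hP1 : ∀ s, ∑ s', P s s' = 1)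
    (γ : ℝ) (hγ0 : 0 ≤ γ) (hγ1 : γ < 1)
    (D : S → ℝ) (hD : ∀ s, D s = γ * ∑ s', P s s' * D s') (s : S) : D s = 0 := by
  obtain ⟨m, hm⟩ := Finite.exists_max (fun s => |D s|)
  have havg : |∑ s', P m s' * D s'| ≤ |D m| :=
    calc |∑ s', P m s' * D s'| ≤ ∑ s', |P m s' * D s'| := abs_sum_le_sum_abs _ _
      _ ≤ ∑ s', P m s' * |D m| := by
        refine sum_le_sum fun s' _ => ?_
        rw [abs_mul, abs_of_nonneg (hP0 m s')]
        exact mul_le_mul_of_nonneg_left (hm s') (hP0 m s')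
      _ = |D m| := by rw [← sum_mul, hP1, one_mul]
  have hle : |D m| ≤ γ * |D m| :=
    calc |D m| = γ * |∑ s', P m s' * D s'| := by
          conv_lhs => rw [hD m, abs_mul, abs_of_nonneg hγ0]
      _ ≤ γ * |D m| := mul_le_mul_of_nonneg_left havg hγ0
  have hm0 : |D m| ≤ 0 := by nlinarith
  exact abs_nonpos_iff.mp ((hm s).trans hm0)

/-- if Q is the fixed point of the Bellman optimality operator and π is
greedy with respect to Q, then the value function of π (the unique fixed point of the
policy evaluation operator) equals the optimal value function `max_a Q(s,a)`. -/
theorem greedy_policy_achieves_optimal_value {S A : Type*} [Fintype S] [Fintype A]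
    [Nonempty S] [Nonempty A]
    (T : S → A → S → ℝ) (hT0 : ∀ s a s', 0 ≤ T s a s') (hT1 : ∀ s a, ∑ s', T s a s' = 1)
    (R : S → ℝ) (γ : ℝ) (hγ0 : 0 ≤ γ) (hγ1 : γ < 1)
    (Q : S → A → ℝ)
    (hQ : ∀ s a, Q s a = R s + γ * ∑ s', T s a s' * univ.sup' univ_nonempty (Q s'))
    (pol : S → A) (hpol : ∀ s a', Q s a' ≤ Q s (pol s))
    (V : S → ℝ) (hV : ∀ s, V s = R s + γ * ∑ s', T s (pol s) s' * V s') :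
    ∀ s, V s = univ.sup' univ_nonempty (Q s) := by
  have hW : ∀ s, univ.sup' univ_nonempty (Q s) = Q s (pol s) := fun s =>
    le_antisymm (sup'_le _ _ fun a _ => hpol s a) (le_sup' (Q s) (mem_univ (pol s)))
  intro s
  refine sub_eq_zero.mp (eq_zero_of_eq_discounted_average (fun s => T s (pol s))
    (fun s => hT0 s (pol s)) (fun s => hT1 s (pol s)) γ hγ0 hγ1
    (fun s => V s - univ.sup' univ_nonempty (Q s)) (fun s => ?_) s)
  have h := hQ s (pol s)
  rw [← hW s] at h
  simp only [mul_sub, sum_sub_distrib]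
  linarith [hV s]
end

section
/- Let P be a row-stochastic matrix indexed by a finite state set S and let j ∈ S be such that for every i ∈ S there exists n ≥ 1 with (P^n)_{i,j} > 0. Let M be the substochastic matrix obtained from P by deleting the row and column of j. Then M^n converges to the zero matrix as n → ∞, the matrix I − M is invertible, and the vector h = (I − M)^{-1}·𝟙 (where 𝟙 is the all-ones vector indexed by S∖{j}) is the unique solution of the expected-hitting-time equations h_i = 1 + ∑_{k∈S, k≠j} P_{i,k}·h_k for all i ∈ S∖{j}. -/
/-!
The row sums `r n = M ^ n 𝟙` are nonnegative and decrease in `n`, so they converge to some `l ≥ 0`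
with `M l = l`. Extended by `0` at `j`, the vector `l` becomes a subharmonic function `u ≤ P u`,
hence `u ≤ P ^ n u` for all `n`. If the maximum `c` of `u` were positive, choosing `n` with
`(P ^ n) i j > 0` at a maximiser `i` would give `c ≤ ∑ k, (P ^ n) i k * u k ≤ c * (1 - (P ^ n) i j)`,
which is less than `c` (`subharmonic_nonpos`). So `l = 0`, and since the entries of `M ^ n` lie
between `0` and the row sums, `M ^ n → 0`. A vector fixed by `M` is then fixed by every `M ^ n` and
must vanish, so `1 - M` is invertible, and the hitting-time equations say `(1 - M) h = 𝟙`.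
-/

open Finset Matrix

theorem pow_nonneg_entries {n : Type*} [Fintype n] [DecidableEq n] {A : Matrix n n ℝ}
    (hA : ∀ i k, 0 ≤ A i k) (m : ℕ) : ∀ i k, 0 ≤ (A ^ m) i k := by
  induction m with
  | zero => intro i k; rw [pow_zero, Matrix.one_apply]; split_ifs <;> norm_num
  | succ m ih =>
    intro i k
    rw [pow_succ, Matrix.mul_apply]
    exact Finset.sum_nonneg fun l _ => mul_nonneg (ih i l) (hA l k)

theorem pow_mulVec_of_fixed {n : Type*} [Fintype n] [DecidableEq n] {A : Matrix n n ℝ} {v : n → ℝ}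
    (hA : A *ᵥ v = v) (m : ℕ) : (A ^ m) *ᵥ v = v := by
  induction m with
  | zero => simp
  | succ m ih => rw [pow_succ, ← Matrix.mulVec_mulVec, hA, ih]

theorem mulVec_mono_of_nonneg {n : Type*} [Fintype n] {A : Matrix n n ℝ}
    (hA : ∀ i k, 0 ≤ A i k) {v w : n → ℝ} (h : v ≤ w) : A *ᵥ v ≤ A *ᵥ w := fun i =>
  Finset.sum_le_sum fun k _ => mul_le_mul_of_nonneg_left (h k) (hA i k)

/-- Maximum principle: a subharmonic function of the chain `P` that vanishes at a state `j`
accessible from everywhere is nonpositive. -/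
theorem subharmonic_nonpos {S : Type*} [Fintype S] [DecidableEq S]
    {P : Matrix S S ℝ} (hP0 : ∀ i k, 0 ≤ P i k) (hP1 : ∀ i, ∑ k, P i k = 1)
    {j : S} (hreach : ∀ i, ∃ n : ℕ, 1 ≤ n ∧ 0 < (P ^ n) i j)
    {u : S → ℝ} (huj : u j = 0) (hu : u ≤ P *ᵥ u) : u ≤ 0 := by
  have hpow : ∀ n : ℕ, u ≤ (P ^ n) *ᵥ u := by
    intro n
    induction n with
    | zero => simp
    | succ n ih =>
      rw [pow_succ, ← Matrix.mulVec_mulVec]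
      exact ih.trans (mulVec_mono_of_nonneg (pow_nonneg_entries hP0 n) hu)
  have hsum : ∀ (n : ℕ) i, ∑ k, (P ^ n) i k = 1 := by
    intro n i
    have h1 : P *ᵥ (fun _ => (1 : ℝ)) = fun _ => 1 := by
      ext i; simpa [Matrix.mulVec, dotProduct] using hP1 i
    simpa [Matrix.mulVec, dotProduct] using congrFun (pow_mulVec_of_fixed h1 n) i
  obtain ⟨i, -, hi⟩ := Finset.exists_max_image Finset.univ u ⟨j, Finset.mem_univ j⟩
  obtain ⟨n, -, hn⟩ := hreach i
  have hci : u i ≤ 0 := by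
    by_contra! hpos
    have hlt : ∑ k, (P ^ n) i k * u k < ∑ k, (P ^ n) i k * u i := by
      refine Finset.sum_lt_sum (fun k _ => mul_le_mul_of_nonneg_left (hi k (Finset.mem_univ k))
        (pow_nonneg_entries hP0 n i k)) ⟨j, Finset.mem_univ j, ?_⟩
      rw [huj]
      exact mul_lt_mul_of_pos_left hpos hn
    rw [← Finset.sum_mul, hsum, one_mul] at hlt
    exact absurd (hpow n i) (not_le.mpr hlt)
  exact fun k => (hi k (Finset.mem_univ k)).trans hci

/-- if from every state the target j is reachable with positive
probability, then the substochastic matrix M (P with row and column j deleted)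
satisfies M^n → 0, I − M is invertible, and `h = (I − M)⁻¹·𝟙` is the unique
solution of the expected-hitting-time equations `h_i = 1 + ∑_{k≠j} P_{i,k}·h_k`. -/
theorem hitting_time_equations {S : Type*} [Fintype S] [DecidableEq S]
    (P : Matrix S S ℝ) (hP0 : ∀ i k, 0 ≤ P i k) (hP1 : ∀ i, ∑ k, P i k = 1)
    (j : S) (hreach : ∀ i, ∃ n : ℕ, 1 ≤ n ∧ 0 < (P ^ n) i j)
    (M : Matrix {i : S // i ≠ j} {i : S // i ≠ j} ℝ)
    (hM : ∀ i k, M i k = P i.1 k.1)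
    (h : {i : S // i ≠ j} → ℝ)
    (hh : h = (1 - M)⁻¹ *ᵥ fun _ => (1 : ℝ)) :
    Filter.Tendsto (fun n : ℕ => M ^ n) Filter.atTop (nhds 0) ∧
    IsUnit (1 - M) ∧
    (∀ i, h i = 1 + ∑ k, P i.1 k.1 * h k) ∧
    (∀ h' : {i : S // i ≠ j} → ℝ,
      (∀ i, h' i = 1 + ∑ k, P i.1 k.1 * h' k) → h' = h) := by
  have hM0 : ∀ i k, 0 ≤ M i k := fun i k => by rw [hM]; exact hP0 _ _
  have hsplit : ∀ (i : S) (u : S → ℝ), u j = 0 →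
      ∑ k, P i k * u k = ∑ k : {k : S // k ≠ j}, P i k.1 * u k.1 := by
    intro i u huj
    rw [← Finset.sum_subtype (Finset.univ.erase j) (by simp) (fun k => P i k * u k)]
    exact (Finset.sum_erase _ (by simp [huj])).symm
  have hM1 : M *ᵥ (fun _ => (1 : ℝ)) ≤ fun _ => 1 := by
    intro i
    simp only [Matrix.mulVec, dotProduct, mul_one, hM]
    rw [← hP1 i.1, ← Finset.sum_subtype (Finset.univ.erase j) (by simp) (fun k => P i.1 k)]
    exact Finset.sum_le_sum_of_subset_of_nonneg (Finset.erase_subset _ _)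
      fun k _ _ => hP0 _ _
  let r : ℕ → {i : S // i ≠ j} → ℝ := fun n => (M ^ n) *ᵥ fun _ => 1
  have hr0 : ∀ n i, 0 ≤ r n i := fun n i =>
    Finset.sum_nonneg fun k _ => mul_nonneg (pow_nonneg_entries hM0 n i k) zero_le_one
  have hranti : Antitone r := antitone_nat_of_succ_le fun n => by
    simp only [r]
    rw [pow_succ, ← Matrix.mulVec_mulVec]
    exact mulVec_mono_of_nonneg (pow_nonneg_entries hM0 n) hM1
  obtain ⟨l, hl⟩ : ∃ l, Filter.Tendsto r Filter.atTop (nhds l) := by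
    refine ⟨fun i => ⨅ n, r n i, tendsto_pi_nhds.2 fun i => ?_⟩
    exact tendsto_atTop_ciInf (fun a b hab => hranti hab i)
      ⟨0, by rintro _ ⟨n, rfl⟩; exact hr0 n i⟩
  have hl0 : 0 ≤ l := ge_of_tendsto' hl fun n i => hr0 n i
  have hlfix : M *ᵥ l = l := by
    have hcont : Continuous fun v : {i : S // i ≠ j} → ℝ => M *ᵥ v := by fun_prop
    have h1 : Filter.Tendsto (fun n => M *ᵥ r n) Filter.atTop (nhds (M *ᵥ l)) :=
      (hcont.tendsto l).comp hl
    have h2 : (fun n => M *ᵥ r n) = fun n => r (n + 1) := by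
      funext n
      simp only [r]
      rw [Matrix.mulVec_mulVec, ← pow_succ']
    rw [h2] at h1
    exact tendsto_nhds_unique h1 (hl.comp (Filter.tendsto_add_atTop_nat 1))
  have hlzero : l = 0 := by
    let u : S → ℝ := fun i => if hi : i ≠ j then l ⟨i, hi⟩ else 0
    have huj : u j = 0 := by simp [u]
    have hul : ∀ i : {i : S // i ≠ j}, u i.1 = l i := fun i => dif_pos i.2
    have hu : u ≤ P *ᵥ u := by
      intro i
      have hPu : (P *ᵥ u) i = ∑ k : {k : S // k ≠ j}, P i k.1 * l k := by
        simp only [← hul]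
        exact hsplit i u huj
      rw [hPu]
      by_cases hi : i = j
      · rw [hi, huj]
        exact Finset.sum_nonneg fun k _ => mul_nonneg (hP0 _ _) (hl0 k)
      · have h1 := congrFun hlfix ⟨i, hi⟩
        simp only [Matrix.mulVec, dotProduct, hM] at h1
        rw [h1]
        exact (hul ⟨i, hi⟩).le
    refine le_antisymm (fun i => ?_) hl0
    rw [← hul i]
    exact subharmonic_nonpos hP0 hP1 hreach huj hu i.1
  have hlim : Filter.Tendsto (fun n : ℕ => M ^ n) Filter.atTop (nhds 0) := by
    refine tendsto_pi_nhds.2 fun i => tendsto_pi_nhds.2 fun k => ?_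
    have hri : Filter.Tendsto (fun n => r n i) Filter.atTop (nhds 0) := by
      have := tendsto_pi_nhds.1 hl i
      rwa [hlzero] at this
    refine squeeze_zero (fun n => pow_nonneg_entries hM0 n i k) (fun n => ?_) hri
    simp only [r, Matrix.mulVec, dotProduct, mul_one]
    exact Finset.single_le_sum (f := fun k => (M ^ n) i k)
      (fun k _ => pow_nonneg_entries hM0 n i k) (Finset.mem_univ k)
  have hunit : IsUnit (1 - M) := by
    rw [← Matrix.mulVec_injective_iff_isUnit]
    refine (injective_iff_map_eq_zero (Matrix.mulVecLin (1 - M))).2 fun v hv => ?_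
    have hfix : M *ᵥ v = v := by
      rw [Matrix.mulVecLin_apply, Matrix.sub_mulVec, Matrix.one_mulVec] at hv
      exact (sub_eq_zero.1 hv).symm
    have hcont : Continuous fun A : Matrix {i : S // i ≠ j} {i : S // i ≠ j} ℝ => A *ᵥ v := by
      fun_prop
    have h1 : Filter.Tendsto (fun n : ℕ => (M ^ n) *ᵥ v) Filter.atTop (nhds (0 *ᵥ v)) :=
      (hcont.tendsto 0).comp hlim
    simp only [pow_mulVec_of_fixed hfix, Matrix.zero_mulVec] at h1
    exact tendsto_nhds_unique tendsto_const_nhds h1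
  have hdet : IsUnit (1 - M).det := (Matrix.isUnit_iff_isUnit_det _).1 hunit
  have hiff : ∀ v : {i : S // i ≠ j} → ℝ,
      (∀ i, v i = 1 + ∑ k, P i.1 k.1 * v k) ↔ (1 - M) *ᵥ v = fun _ => 1 := by
    intro v
    rw [Matrix.sub_mulVec, Matrix.one_mulVec, funext_iff]
    refine forall_congr' fun i => ?_
    simp only [Pi.sub_apply, Matrix.mulVec, dotProduct, hM]
    exact sub_eq_iff_eq_add.symm
  refine ⟨hlim, hunit, (hiff h).2 ?_, fun h' hh' => ?_⟩
  · rw [hh, Matrix.mulVec_mulVec, Matrix.mul_nonsing_inv _ hdet, Matrix.one_mulVec]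
  · rw [hh, ← (hiff h').1 hh', Matrix.mulVec_mulVec, Matrix.nonsing_inv_mul _ hdet,
      Matrix.one_mulVec]
end
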